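/- There exists a universal constant c > 0 such that the following holds. Let k ∈ ℕ and let α : [0,1] → [0,1] be continuous. Suppose that for every even m and every f' : S(m,1/2) → {0,1} with ‖f'^{>k}‖₂² ≤ ε', f' is α(ε')-close (with respect to the uniform measure on S(m,1/2)) to a function g' : S(m,1/2) → {0,1} of degree ≤ k. Then for every n ∈ ℕ and every ε ∈ [0,1] with α(ε) < 2^{−ck}, every f : {0,1}^n → {0,1} with W^{>k}(f) ≤ ε is α(ε)-close (with respect to the uniform measure on {0,1}^n) to a function g : {0,1}^n → {0,1} of degree ≤ k. -/

import Mathlib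

open Finset
open scoped Classical

/-- A point of the slice `S(n,p)`: a Boolean vector whose number of ones equals `p * n`. -/
abbrev SlicePoint (n : ℕ) (p : ℝ) : Type :=
  {x : Fin n → Bool // ((Finset.univ.filter (fun i => x i = true)).card : ℝ) = p * n}

variable {n : ℕ} {p : ℝ}

/-- Expectation with respect to the uniform measure on the slice. -/
noncomputable def sExp (f : SlicePoint n p → ℝ) : ℝ :=
  (∑ x : SlicePoint n p, f x) / (Fintype.card (SlicePoint n p) : ℝ)

/-- The inner product `⟨f,g⟩ = E_x [f x * g x]` on functions on the slice. -/
noncomputable def sInner (f g : SlicePoint n p → ℝ) : ℝ :=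
  sExp (fun x => f x * g x)

/-- `‖f‖₂² = E_x [f x ^ 2]`. -/
noncomputable def sNormSq (f : SlicePoint n p → ℝ) : ℝ := sInner f f

/-- `‖f‖₂`. -/
noncomputable def sNorm (f : SlicePoint n p → ℝ) : ℝ := Real.sqrt (sNormSq f)

/-- The `i`-th coordinate of a slice point, viewed as a real number in `{0,1}`. -/
def coordR (x : SlicePoint n p) (i : Fin n) : ℝ := if x.1 i then 1 else 0

/-- `AND_T (x) = ∏_{i ∈ T} x_i`. -/
def andT (T : Finset (Fin n)) : SlicePoint n p → ℝ := fun x => ∏ i ∈ T, coordR x i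

/-- The space `L_k` of functions of degree at most `k` on the slice. -/
def degLE (n : ℕ) (p : ℝ) (k : ℕ) : Submodule ℝ (SlicePoint n p → ℝ) :=
  Submodule.span ℝ {g | ∃ T : Finset (Fin n), T.card ≤ k ∧ g = andT T}

/-- The space `L_{k-1}` (i.e. spanned by `AND_T` with `|T| < k`). -/
def degLT (n : ℕ) (p : ℝ) (k : ℕ) : Submodule ℝ (SlicePoint n p → ℝ) :=
  Submodule.span ℝ {g | ∃ T : Finset (Fin n), T.card < k ∧ g = andT T}

/-- `fk` is the orthogonal projection `f^{≤ k}` of `f` onto `L_k`. -/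
def IsLowProj (n : ℕ) (p : ℝ) (k : ℕ) (f fk : SlicePoint n p → ℝ) : Prop :=
  fk ∈ degLE n p k ∧ ∀ g ∈ degLE n p k, sInner (f - fk) g = 0

/-- `fk` is the orthogonal projection of `f` onto the span of `AND_T`, `|T| < k`. -/
def IsLowProjLT (n : ℕ) (p : ℝ) (k : ℕ) (f fk : SlicePoint n p → ℝ) : Prop :=
  fk ∈ degLT n p k ∧ ∀ g ∈ degLT n p k, sInner (f - fk) g = 0

/-- `Pr_x [f x ≠ g x]` under the uniform measure on the slice. -/
noncomputable def probNe (f g : SlicePoint n p → ℝ) : ℝ :=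
  sExp (fun x => if f x = g x then 0 else 1)

/-- The action of a permutation on a slice point: `(x^π)_{π i} = x_i`. -/
def permPt (π : Equiv.Perm (Fin n)) (x : SlicePoint n p) : SlicePoint n p :=
  ⟨fun i => x.1 (π.symm i), by
    have h : (Finset.univ.filter (fun i => x.1 (π.symm i) = true)) =
        (Finset.univ.filter (fun i => x.1 i = true)).map π.toEmbedding := by
      ext i
      simp [Finset.mem_map_equiv]
    rw [h, Finset.card_map]
    exact x.2⟩

/-- The derivative operator `D_{ij} f = (f - f^{(ij)})/2`. -/
noncomputable def Dij (i j : Fin n) (f : SlicePoint n p → ℝ) : SlicePoint n p → ℝ :=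
  fun x => (f x - f (permPt (Equiv.swap i j) x)) / 2

/-- The derivative operator `D_P` associated with a set `P` of pairs,
obtained by composing the `D_{ab}` for `(a,b) ∈ P` (these commute for tuples). -/
noncomputable def DP (P : Finset (Fin n × Fin n)) (f : SlicePoint n p → ℝ) :
    SlicePoint n p → ℝ :=
  P.toList.foldr (fun q g => Dij q.1 q.2 g) f

/-- `P` is a `k`-tuple: `k` pairs `(a,b)` with `a < b`, all `2k` entries distinct. -/
def IsTuple {n : ℕ} (k : ℕ) (P : Finset (Fin n × Fin n)) : Prop :=
  P.card = k ∧ (∀ q ∈ P, q.1 < q.2) ∧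
    ∀ q ∈ P, ∀ r ∈ P, q ≠ r →
      q.1 ≠ r.1 ∧ q.1 ≠ r.2 ∧ q.2 ≠ r.1 ∧ q.2 ≠ r.2

/-- `P` is shifted: for every pair `(a,b) ∈ P`, every `a' ≤ a` occurs as an entry of `P`. -/
def IsShifted {n : ℕ} (P : Finset (Fin n × Fin n)) : Prop :=
  ∀ q ∈ P, ∀ a : Fin n, a ≤ q.1 → ∃ r ∈ P, r.1 = a ∨ r.2 = a

/-- `P` is sorted: `a_i < a_j ↔ b_i < b_j`. -/
def IsSorted {n : ℕ} (P : Finset (Fin n × Fin n)) : Prop :=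
  ∀ q ∈ P, ∀ r ∈ P, (q.1 < r.1 ↔ q.2 < r.2)

/-- `Ψ_P (x) = ∏_{(a,b) ∈ P} (x_b - x_a)`. -/
def PsiP (P : Finset (Fin n × Fin n)) : SlicePoint n p → ℝ :=
  fun x => ∏ q ∈ P, (coordR x q.2 - coordR x q.1)

/-- The slice Laplacian `L f = f - (1 / C(n,2)) ∑_{i<j} f^{(ij)}`. -/
noncomputable def sliceLap (f : SlicePoint n p → ℝ) : SlicePoint n p → ℝ :=
  fun x => f x -
    (∑ q ∈ Finset.univ.filter (fun q : Fin n × Fin n => q.1 < q.2),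
      f (permPt (Equiv.swap q.1 q.2) x)) / (n.choose 2 : ℝ)

/-- The noise operator `H_t = exp (-t L) = ∑_l (-t)^l L^l / l!`. -/
noncomputable def Ht (t : ℝ) (f : SlicePoint n p → ℝ) : SlicePoint n p → ℝ :=
  fun x => ∑' l : ℕ, ((-t) ^ l / (l.factorial : ℝ)) * (sliceLap^[l] f) x

/-- The averaging operator `E_I f (x) = E_{Q ∼ S_I} [f (x^Q)]`, averaging over a uniformly
random permutation of the coordinates in `I` (fixing the coordinates outside `I`). -/
noncomputable def avgI (I : Finset (Fin n)) (f : SlicePoint n p → ℝ) : SlicePoint n p → ℝ :=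
  fun x => (∑ σ : {σ : Equiv.Perm (Fin n) // ∀ i ∉ I, σ i = i}, f (permPt σ.1 x)) /
    (Fintype.card {σ : Equiv.Perm (Fin n) // ∀ i ∉ I, σ i = i} : ℝ)

/-- The conditional variance `V_I (f) = ‖f - E_I f‖₂²`. -/
noncomputable def condVar (I : Finset (Fin n)) (f : SlicePoint n p → ℝ) : ℝ :=
  sNormSq (f - avgI I f)

/-- Expectation with respect to the uniform measure on the discrete cube. -/
noncomputable def cExp {n : ℕ} (f : (Fin n → Bool) → ℝ) : ℝ :=
  (∑ x : Fin n → Bool, f x) / (2 ^ n : ℝ)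

/-- The Fourier–Walsh coefficient `f̂ (S) = E_x [f x * χ_S x]`. -/
noncomputable def walshCoeff {n : ℕ} (f : (Fin n → Bool) → ℝ) (S : Finset (Fin n)) : ℝ :=
  cExp (fun x => f x * ∏ i ∈ S, (if x i then (-1 : ℝ) else 1))

/-- The Fourier weight of `f` beyond degree `k`: `W^{>k} (f) = ∑_{|S| > k} f̂(S)²`. -/
noncomputable def WAbove {n : ℕ} (k : ℕ) (f : (Fin n → Bool) → ℝ) : ℝ :=
  ∑ S ∈ Finset.univ.filter (fun S : Finset (Fin n) => k < S.card), walshCoeff f S ^ 2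

/-- `Pr_x [f x ≠ g x]` under the uniform measure on the cube. -/
noncomputable def cProbNe {n : ℕ} (f g : (Fin n → Bool) → ℝ) : ℝ :=
  cExp (fun x => if f x = g x then 0 else 1)

/-- The action of a permutation on a point of the cube: `(x^π)_{π i} = x_i`. -/
def cPerm {n : ℕ} (π : Equiv.Perm (Fin n)) (x : Fin n → Bool) : Fin n → Bool :=
  fun i => x (π.symm i)

/-- The derivative operator on the cube. -/
noncomputable def cDij {n : ℕ} (i j : Fin n) (f : (Fin n → Bool) → ℝ) :
    (Fin n → Bool) → ℝ :=
  fun x => (f x - f (cPerm (Equiv.swap i j) x)) / 2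

namespace KSR

/-- sign character -/
noncomputable def chi {n : ℕ} (S : Finset (Fin n)) (x : Fin n → Bool) : ℝ :=
  ∏ i ∈ S, (if x i then (-1 : ℝ) else 1)

/-- number of ones -/
def wt {n : ℕ} (x : Fin n → Bool) : ℕ := (Finset.univ.filter (fun i => x i = true)).card

lemma walsh_eq {n : ℕ} (f : (Fin n → Bool) → ℝ) (S : Finset (Fin n)) :
    walshCoeff f S = (∑ x, f x * chi S x) / 2 ^ n := rfl

/-- a function depending only on coordinates in `J` has no Walsh coefficients outside `J`. -/
lemma walsh_junta {n : ℕ} (f : (Fin n → Bool) → ℝ) (J S : Finset (Fin n))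
    (hf : ∀ x y : Fin n → Bool, (∀ i ∈ J, x i = y i) → f x = f y) (hS : ¬ S ⊆ J) :
    walshCoeff f S = 0 := by
  obtain ⟨i, hiS, hiJ⟩ := Finset.not_subset.1 hS
  have hinv : Function.Involutive (fun x : Fin n → Bool => Function.update x i (!x i)) := by
    intro x; simp
  have key : ∑ x, f x * chi S x = ∑ x, -(f x * chi S x) := by
    rw [← Equiv.sum_comp hinv.toPerm]
    apply Finset.sum_congr rfl
    intro x _
    have h1 : f (Function.update x i (!x i)) = f x := by
      apply hf
      intro j hj
      have : j ≠ i := fun h => hiJ (h ▸ hj)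
      simp [this]
    have h2 : chi S (Function.update x i (!x i)) = - chi S x := by
      unfold chi
      rw [← Finset.mul_prod_erase _ _ hiS, ← Finset.mul_prod_erase S _ hiS]
      have : ∏ j ∈ S.erase i, (if Function.update x i (!x i) j then (-1 : ℝ) else 1)
          = ∏ j ∈ S.erase i, (if x j then (-1 : ℝ) else 1) := by
        apply Finset.prod_congr rfl
        intro j hj
        rw [Function.update_of_ne (Finset.ne_of_mem_erase hj)]
      rw [this]
      cases x i <;> simp
    simp only [Function.Involutive.coe_toPerm, h1, h2]
    ring
  rw [Finset.sum_neg_distrib] at key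
  have : ∑ x, f x * chi S x = 0 := by linarith
  rw [walsh_eq, this, zero_div]

lemma walsh_inv {n : ℕ} (f : (Fin n → Bool) → ℝ) (x : Fin n → Bool) :
    f x = ∑ S : Finset (Fin n), walshCoeff f S * chi S x := by
  have h : ∀ y : Fin n → Bool, ∑ S : Finset (Fin n), chi S y * chi S x
      = if y = x then (2:ℝ) ^ n else 0 := by
    intro y
    have : ∑ S : Finset (Fin n), chi S y * chi S x
        = ∏ i : Fin n, (1 + (if y i then (-1 : ℝ) else 1) * (if x i then (-1 : ℝ) else 1)) := by
      rw [Finset.prod_one_add]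
      simp only [chi, Finset.prod_mul_distrib, Finset.powerset_univ]
    rw [this]
    split_ifs with hxy
    · subst hxy
      rw [Finset.prod_congr rfl (g := fun _ => (2:ℝ))]
      · simp
      · intro i _; cases y i <;> norm_num
    · obtain ⟨i, hi⟩ := Function.ne_iff.1 hxy
      apply Finset.prod_eq_zero (Finset.mem_univ i)
      cases hy : y i <;> cases hx : x i <;> simp_all
  simp only [walsh_eq, div_mul_eq_mul_div, Finset.sum_mul]
  rw [← Finset.sum_div, Finset.sum_comm]
  simp only [mul_assoc, ← Finset.mul_sum, h]
  simp

/-- truncation -/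
noncomputable def trunc {n : ℕ} (k : ℕ) (f : (Fin n → Bool) → ℝ) (x : Fin n → Bool) : ℝ :=
  ∑ S ∈ Finset.univ.filter (fun S : Finset (Fin n) => ¬ k < S.card), walshCoeff f S * chi S x

lemma walsh_sum {n : ℕ} {ι : Type*} (A : Finset ι) (c : ι → ℝ) (F : ι → (Fin n → Bool) → ℝ)
    (S : Finset (Fin n)) :
    walshCoeff (fun x => ∑ a ∈ A, c a * F a x) S = ∑ a ∈ A, c a * walshCoeff (F a) S := by
  simp only [walsh_eq, Finset.sum_mul, mul_div_assoc', Finset.mul_sum]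
  rw [Finset.sum_comm, Finset.sum_div]
  simp only [mul_assoc, Finset.sum_div]

lemma trunc_high {n : ℕ} (k : ℕ) (f : (Fin n → Bool) → ℝ) (S : Finset (Fin n)) (hS : k < S.card) :
    walshCoeff (trunc k f) S = 0 := by
  unfold trunc
  rw [walsh_sum]
  apply Finset.sum_eq_zero
  intro T hT
  rw [walsh_junta (chi T) T S, mul_zero]
  · intro x y h
    exact Finset.prod_congr rfl (fun i hi => by rw [h i hi])
  · intro h
    have := Finset.card_le_card h
    simp at hT
    omega

lemma trunc_err {n : ℕ} (k : ℕ) (f : (Fin n → Bool) → ℝ) :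
    (∑ x, (f x - trunc k f x) ^ 2) / 2 ^ n = WAbove k f := by
  have hd : ∀ x, f x - trunc k f x =
      ∑ S ∈ Finset.univ.filter (fun S : Finset (Fin n) => k < S.card),
        walshCoeff f S * chi S x := by
    intro x
    have := walsh_inv f x
    rw [← Finset.sum_filter_add_sum_filter_not _ (fun S : Finset (Fin n) => k < S.card)] at this
    rw [trunc]; linarith
  have e : ∀ x, (f x - trunc k f x) ^ 2 =
      ∑ S ∈ Finset.univ.filter (fun S : Finset (Fin n) => k < S.card),
        walshCoeff f S * (f x * chi S x - trunc k f x * chi S x) := by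
    intro x
    rw [sq]; nth_rewrite 2 [hd x]
    rw [Finset.mul_sum]
    exact Finset.sum_congr rfl (fun S _ => by ring)
  simp only [e]
  rw [Finset.sum_comm, Finset.sum_div, WAbove]
  apply Finset.sum_congr rfl
  intro S hS
  have h0 := trunc_high k f S (by simpa using hS)
  rw [← Finset.mul_sum, Finset.sum_sub_distrib, mul_div_assoc, sub_div, ← walsh_eq, ← walsh_eq, h0]
  ring

lemma exists_proj {m : ℕ} {p : ℝ} (k : ℕ) (f : SlicePoint m p → ℝ) :
    ∃ fk, IsLowProj m p k f fk := by
  let e := WithLp.linearEquiv 2 ℝ (SlicePoint m p → ℝ)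
  let K : Submodule ℝ (EuclideanSpace ℝ (SlicePoint m p)) := (degLE m p k).comap e.toLinearMap
  obtain ⟨y, hy, z, hz, hyz⟩ := K.exists_add_mem_mem_orthogonal (e.symm f)
  refine ⟨e y, hy, ?_⟩
  intro g hg
  have hg' : e.symm g ∈ K := by
    show e (e.symm g) ∈ degLE m p k
    simpa using hg
  have := hz _ hg'
  have hfz : f - e y = e z := by
    have := congrArg e hyz
    simp at this
    rw [this]; simp
  rw [hfz]
  unfold sInner sExp
  have h2 : ∑ x, e z x * g x = 0 := by
    rw [← this, PiLp.inner_apply]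
    rfl
  rw [h2, zero_div]

lemma proj_le {m : ℕ} {p : ℝ} (k : ℕ) (f fk F : SlicePoint m p → ℝ)
    (h : IsLowProj m p k f fk) (hF : F ∈ degLE m p k) :
    sNormSq (f - fk) ≤ sNormSq (f - F) := by
  have h0 := h.2 (fk - F) (Submodule.sub_mem _ h.1 hF)
  have : sNormSq (f - F) = sNormSq (f - fk) + 2 * sInner (f - fk) (fk - F) + sNormSq (fk - F) := by
    simp only [sNormSq, sInner, sExp, ← mul_div_assoc, ← add_div, Finset.mul_sum,
      ← Finset.sum_add_distrib, Pi.sub_apply]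
    congr 1
    exact Finset.sum_congr rfl (fun x _ => by ring)
  have h3 : 0 ≤ sNormSq (fk - F) := by
    unfold sNormSq sInner sExp
    exact div_nonneg (Finset.sum_nonneg (fun x _ => mul_self_nonneg _)) (by positivity)
  linarith

/-- degree of the extension -/
lemma ext_deg {n N k : ℕ} {p : ℝ} (f : (Fin n → Bool) → ℝ) :
    (fun y : SlicePoint (n + N) p => trunc k f (fun i => y.1 (Fin.castAdd N i)))
      ∈ degLE (n + N) p k := by
  have : (fun y : SlicePoint (n + N) p => trunc k f (fun i => y.1 (Fin.castAdd N i))) =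
      ∑ S ∈ Finset.univ.filter (fun S : Finset (Fin n) => ¬ k < S.card),
        walshCoeff f S • ∑ T ∈ S.powerset,
          ((-2 : ℝ) ^ T.card) • andT (T.map (Fin.castAddEmb N)) := by
    ext y
    simp only [trunc, Finset.sum_apply, Pi.smul_apply, smul_eq_mul]
    apply Finset.sum_congr rfl
    intro S _
    congr 1
    rw [chi, Finset.prod_congr rfl (g := fun i => 1 + (-2) * coordR y (Fin.castAdd N i))]
    · rw [Finset.prod_one_add]
      apply Finset.sum_congr rfl
      intro T _
      rw [Finset.prod_mul_distrib, Finset.prod_const, andT, Finset.prod_map]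
      rfl
    · intro i _
      unfold coordR
      split_ifs <;> norm_num
  rw [this]
  refine Submodule.sum_mem _ (fun S hS => Submodule.smul_mem _ _ (Submodule.sum_mem _
    (fun T hT => Submodule.smul_mem _ _ (Submodule.subset_span ⟨_, ?_, rfl⟩))))
  rw [Finset.card_map]
  have := Finset.card_le_card (Finset.mem_powerset.1 hT)
  simp at hS
  omega

/-- restriction to a subcube -/
lemma restr_deg {n m k : ℕ} {p : ℝ} (g : SlicePoint m p → ℝ) (hg : g ∈ degLE m p k)
    (P : (Fin n → Bool) → SlicePoint m p) (c : Fin m → Finset (Fin n))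
    (hc : ∀ i, (c i).card ≤ 1)
    (hP : ∀ i (x y : Fin n → Bool), (∀ j ∈ c i, x j = y j) → (P x).1 i = (P y).1 i)
    (S : Finset (Fin n)) (hS : k < S.card) : walshCoeff (fun x => g (P x)) S = 0 := by
  induction hg using Submodule.span_induction with
  | mem g h =>
    obtain ⟨T, hT, rfl⟩ := h
    apply walsh_junta _ (T.biUnion c)
    · intro x y h
      unfold andT coordR
      apply Finset.prod_congr rfl
      intro i hi
      rw [hP i x y (fun j hj => h j (Finset.mem_biUnion.2 ⟨i, hi, hj⟩))]
    · intro h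
      have h1 := Finset.card_le_card h
      have h2 := Finset.card_biUnion_le_card_mul T c 1 (fun i _ => hc i)
      omega
  | zero => simp [walsh_eq]
  | add a b _ _ ha hb =>
    rw [walsh_eq] at *
    simp only [Pi.add_apply, add_mul, Finset.sum_add_distrib, add_div, ha, hb, add_zero]
  | smul r a _ ha =>
    rw [walsh_eq] at *
    simp only [Pi.smul_apply, smul_eq_mul, mul_assoc, ← Finset.mul_sum, mul_div_assoc, ha, mul_zero]

lemma wt_sum {n : ℕ} (x : Fin n → Bool) : wt x = ∑ i, if x i = true then 1 else 0 := by
  rw [wt, Finset.card_filter]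

lemma wt_append {a b : ℕ} (x : Fin a → Bool) (w : Fin b → Bool) :
    wt (Fin.append x w) = wt x + wt w := by
  rw [wt_sum, wt_sum, wt_sum, Fin.sum_univ_add]
  simp only [Fin.append_left, Fin.append_right]

lemma wt_not {n : ℕ} (x : Fin n → Bool) : wt x + wt (fun i => !x i) = n := by
  rw [wt_sum, wt_sum, ← Finset.sum_add_distrib, Finset.sum_congr rfl (g := fun _ => 1)]
  · simp
  · intro i _; cases x i <;> simp

lemma wt_perm {n : ℕ} (x : Fin n → Bool) (σ : Equiv.Perm (Fin n)) :
    wt (fun i => x (σ i)) = wt x := by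
  rw [wt_sum, wt_sum]
  exact Equiv.sum_comp σ (fun i => if x i = true then 1 else 0)

lemma wt_trans {n : ℕ} (x y : Fin n → Bool) (h : wt x = wt y) :
    ∃ σ : Equiv.Perm (Fin n), y = fun i => x (σ i) := by
  have hc : Fintype.card {i // y i = true} = Fintype.card {i // x i = true} := by
    rw [Fintype.card_subtype, Fintype.card_subtype]; exact h.symm
  let e := Fintype.equivOfCardEq hc
  refine ⟨e.extendSubtype, ?_⟩
  ext i
  by_cases hi : y i = true
  · rw [hi, e.extendSubtype_mem i hi]
  · have := e.extendSubtype_not_mem i hi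
    simp only [Bool.not_eq_true] at hi this
    rw [hi, this]

lemma wt_count (N a : ℕ) :
    (Finset.univ.filter (fun w : Fin N → Bool => wt w = a)).card = N.choose a := by
  have h := Finset.card_powersetCard a (Finset.univ : Finset (Fin N))
  rw [Finset.card_univ, Fintype.card_fin] at h
  rw [← h]
  refine Finset.card_bij' (fun w _ => Finset.univ.filter (fun i => w i = true))
    (fun s _ i => decide (i ∈ s)) ?_ ?_ ?_ ?_
  · intro w hw
    rw [Finset.mem_filter] at hw
    simpa [wt, Finset.mem_powersetCard] using hw
  · intro s hs
    rw [Finset.mem_filter]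
    simpa [wt, Finset.mem_powersetCard] using hs
  · intro w _
    ext i; simp
  · intro s _
    ext i; simp

lemma slice_iff {n t : ℕ} (y : Fin (n + (n + (t + t))) → Bool) :
    ((Finset.univ.filter (fun i => y i = true)).card : ℝ) = 1 / 2 * (n + (n + (t + t)) : ℕ) ↔
      wt y = n + t := by
  change (wt y : ℝ) = _ ↔ _
  rw [← Nat.cast_inj (R := ℝ)]
  push_cast
  constructor <;> intro h <;> linarith

lemma slice_sum {n t : ℕ} (u : (Fin (n + (n + (t + t))) → Bool) → ℝ) :
    ∑ y : SlicePoint (n + (n + (t + t))) (1 / 2), u y.1 =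
      ∑ x : Fin n → Bool, ∑ w ∈ Finset.univ.filter
        (fun w : Fin (n + (t + t)) → Bool => wt w = n + t - wt x), u (Fin.append x w) := by
  have h1 : ∑ y : SlicePoint (n + (n + (t + t))) (1 / 2), u y.1 =
      ∑ y ∈ Finset.univ.filter (fun y : Fin (n + (n + (t + t))) → Bool => wt y = n + t), u y := by
    symm
    apply Finset.sum_subtype
    intro y
    rw [slice_iff]; simp
  rw [h1, Finset.sum_filter, ← Equiv.sum_comp (Fin.appendEquiv n (n + (t + t))),
    Fintype.sum_prod_type]
  apply Finset.sum_congr rfl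
  intro x _
  rw [Finset.sum_filter]
  apply Finset.sum_congr rfl
  intro w _
  have hx := wt_not x
  simp only [Fin.appendEquiv, Equiv.coe_fn_mk, wt_append]
  congr 1
  apply propext
  omega

lemma orbit_sum {N : ℕ} (v : (Fin N → Bool) → ℝ) (w₀ : Fin N → Bool) (a : ℕ) (h : wt w₀ = a) :
    (Fintype.card (Equiv.Perm (Fin N)) : ℝ) * ∑ w ∈ Finset.univ.filter
        (fun w : Fin N → Bool => wt w = a), v w =
      (N.choose a : ℝ) * ∑ σ : Equiv.Perm (Fin N), v (fun i => w₀ (σ i)) := by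
  have h1 : ∀ w ∈ Finset.univ.filter (fun w : Fin N → Bool => wt w = a),
      ∑ σ : Equiv.Perm (Fin N), v (fun i => w (σ i)) =
      ∑ σ : Equiv.Perm (Fin N), v (fun i => w₀ (σ i)) := by
    intro w hw
    obtain ⟨τ, rfl⟩ := wt_trans w₀ w (by rw [h]; exact (Finset.mem_filter.1 hw).2.symm)
    exact Equiv.sum_comp (Equiv.mulLeft τ) (fun σ : Equiv.Perm (Fin N) => v (fun i => w₀ (σ i)))
  have h2 := Finset.sum_congr rfl h1
  rw [Finset.sum_const, wt_count, nsmul_eq_mul] at h2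
  rw [← h2, Finset.sum_comm, ← nsmul_eq_mul, ← Finset.card_univ, ← Finset.sum_const]
  apply Finset.sum_congr rfl
  intro σ _
  symm
  refine Finset.sum_bij' (fun w _ i => w (σ i)) (fun w _ i => w (σ.symm i)) ?_ ?_ ?_ ?_ ?_
  · intro w hw; simpa [wt_perm] using hw
  · intro w hw; simpa [wt_perm] using hw
  · intro w _; ext i; simp
  · intro w _; ext i; simp
  · intro w _; rfl

/-- fibre size -/
def cnt (n t : ℕ) (x : Fin n → Bool) : ℕ := (n + (t + t)).choose (n + t - wt x)

lemma slice_card (n t : ℕ) :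
    (Fintype.card (SlicePoint (n + (n + (t + t))) (1 / 2)) : ℝ) = ∑ x : Fin n → Bool, (cnt n t x : ℝ) := by
  have := slice_sum (n := n) (t := t) (fun _ => 1)
  simpa [wt_count, cnt] using this

/-- law of the first `n` coordinates -/
noncomputable def law (n t : ℕ) (x : Fin n → Bool) : ℝ :=
  (cnt n t x : ℝ) / ∑ y : Fin n → Bool, (cnt n t y : ℝ)

lemma slice_exp {n t : ℕ} (u : (Fin n → Bool) → ℝ) :
    sExp (fun y : SlicePoint (n + (n + (t + t))) (1 / 2) =>
      u (fun i => y.1 (Fin.castAdd (n + (t + t)) i))) = ∑ x, law n t x * u x := by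
  unfold sExp
  rw [slice_card, slice_sum (fun y => u (fun i => y (Fin.castAdd (n + (t + t)) i))), Finset.sum_div]
  apply Finset.sum_congr rfl
  intro x _
  simp only [Fin.append_left, Finset.sum_const, wt_count, law, cnt, nsmul_eq_mul]
  ring

open Filter Topology in
lemma choose_ratio (n j : ℕ) (hj : j ≤ n) :
    Tendsto (fun t : ℕ => (((n + (t + t)).choose (n + t - j) : ℕ) : ℝ) /
      ((n + (t + t)).choose (n + t) : ℕ)) atTop (𝓝 1) := by
  induction j with
  | zero =>
    refine Tendsto.congr (f₁ := fun _ => (1:ℝ)) ?_ tendsto_const_nhds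
    intro t
    have : 0 < (n + (t + t)).choose (n + t) := Nat.choose_pos (by omega)
    rw [Nat.sub_zero, div_self]
    positivity
  | succ j ih =>
    have h1 := ih (by omega)
    have h2 : Tendsto (fun t : ℕ => ((n - j : ℝ) + t) / ((j + 1 : ℝ) + t)) atTop (𝓝 1) := by
      have := tendsto_add_mul_div_add_mul_atTop_nhds (𝕜 := ℝ) (n - j) (j + 1) 1 (d := 1) one_ne_zero
      simpa using this
    have h3 := h1.mul h2
    rw [one_mul] at h3
    refine h3.congr ?_
    intro t
    have key := Nat.choose_succ_right_eq (n + (t + t)) (n + t - (j + 1))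
    have e1 : n + t - (j + 1) + 1 = n + t - j := by omega
    have e2 : n + (t + t) - (n + t - (j + 1)) = j + 1 + t := by omega
    rw [e1, e2] at key
    have key' : (((n + (t + t)).choose (n + t - j) : ℕ) : ℝ) * ((n - j : ℝ) + t) =
        (((n + (t + t)).choose (n + t - (j + 1)) : ℕ) : ℝ) * ((j + 1 : ℝ) + t) := by
      have e3 : ((n - j : ℝ) + t) = ((n + t - j : ℕ) : ℝ) := by
        rw [Nat.cast_sub (by omega)]; push_cast; ring
      rw [e3]
      exact_mod_cast key
    have hpos : (0:ℝ) < (j + 1 : ℝ) + t := by positivity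
    rw [div_mul_div_comm, key', mul_div_mul_right _ _ hpos.ne']

open Filter Topology in
lemma law_tendsto (n : ℕ) (x : Fin n → Bool) :
    Tendsto (fun t : ℕ => law n t x) atTop (𝓝 (1 / 2 ^ n)) := by
  have hw : ∀ y : Fin n → Bool, wt y ≤ n := fun y => by have := wt_not y; omega
  have hs : Tendsto (fun t : ℕ => ∑ y : Fin n → Bool, (((cnt n t y : ℕ) : ℝ) /
      ((n + (t + t)).choose (n + t) : ℕ))) atTop (𝓝 (∑ y : Fin n → Bool, 1)) :=
    tendsto_finsetSum _ (fun y _ => choose_ratio n (wt y) (hw y))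
  have h := (choose_ratio n (wt x) (hw x)).div hs (by simp)
  have e : (∑ y : Fin n → Bool, (1:ℝ)) = 2 ^ n := by simp
  rw [e] at h
  refine h.congr ?_
  intro t
  have : (0:ℝ) < ((n + (t + t)).choose (n + t) : ℕ) := by
    exact_mod_cast Nat.choose_pos (by omega)
  simp only [Pi.div_apply]
  rw [← Finset.sum_div, div_div_div_cancel_right₀ this.ne']
  rfl

/-- base completion -/
def base {n : ℕ} (t : ℕ) (x : Fin n → Bool) : Fin (n + (t + t)) → Bool :=
  Fin.append (fun i => !x i) (Fin.append (fun _ : Fin t => true) (fun _ : Fin t => false))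

lemma wt_base {n : ℕ} (t : ℕ) (x : Fin n → Bool) : wt (base t x) = n + t - wt x := by
  have h := wt_not x
  rw [base, wt_append, wt_append]
  have h1 : wt (fun _ : Fin t => true) = t := by simp [wt]
  have h2 : wt (fun _ : Fin t => false) = 0 := by simp [wt]
  rw [h1, h2]; omega

/-- subcube inside the slice -/
def cubePt {n : ℕ} (t : ℕ) (σ : Equiv.Perm (Fin (n + (t + t)))) (x : Fin n → Bool) :
    SlicePoint (n + (n + (t + t))) (1 / 2) :=
  ⟨Fin.append x (fun i => base t x (σ i)), by
    rw [slice_iff, wt_append, wt_perm, wt_base]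
    have := wt_not x
    omega⟩

lemma cubePt_deg {n k t : ℕ} (σ : Equiv.Perm (Fin (n + (t + t))))
    (g : SlicePoint (n + (n + (t + t))) (1 / 2) → ℝ) (hg : g ∈ degLE _ _ k)
    (S : Finset (Fin n)) (hS : k < S.card) : walshCoeff (fun x => g (cubePt t σ x)) S = 0 := by
  refine restr_deg g hg (cubePt t σ)
    (Fin.append (fun i => {i}) (fun i => Fin.append (fun j : Fin n => ({j} : Finset (Fin n)))
      (fun _ : Fin (t + t) => ∅) (σ i))) ?_ ?_ S hS
  · intro i
    refine Fin.addCases (fun i => ?_) (fun i => ?_) i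
    · simp
    · simp only [Fin.append_right]
      refine Fin.addCases (fun i => ?_) (fun i => ?_) (σ i) <;> simp
  · intro i x y
    refine Fin.addCases (fun i => ?_) (fun i => ?_) i
    · simp [cubePt]
    · simp only [Fin.append_right, cubePt, base]
      refine Fin.addCases (fun i => ?_) (fun i => ?_) (σ i) <;> simp

lemma exists_cube {n t : ℕ} (u : (Fin (n + (n + (t + t))) → Bool) → ℝ) (a : ℝ)
    (h : sExp (fun y : SlicePoint (n + (n + (t + t))) (1 / 2) => u y.1) ≤ a) :
    ∃ σ : Equiv.Perm (Fin (n + (t + t))), ∑ x, law n t x * u (cubePt t σ x).1 ≤ a := by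
  have hp : (0:ℝ) < (Fintype.card (Equiv.Perm (Fin (n + (t + t)))) : ℝ) := by
    exact_mod_cast Fintype.card_pos
  have key : ∑ σ : Equiv.Perm (Fin (n + (t + t))), ∑ x, law n t x * u (cubePt t σ x).1 =
      (Fintype.card (Equiv.Perm (Fin (n + (t + t)))) : ℝ) *
      sExp (fun y : SlicePoint (n + (n + (t + t))) (1 / 2) => u y.1) := by
    unfold sExp
    rw [slice_card, slice_sum, ← mul_div_assoc, Finset.mul_sum, Finset.sum_comm, Finset.sum_div]
    apply Finset.sum_congr rfl
    intro x _
    rw [orbit_sum (fun w => u (Fin.append x w)) (base t x) _ (wt_base t x), ← Finset.mul_sum,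
      law, cnt, div_mul_eq_mul_div]
    rfl
  have : ∑ σ : Equiv.Perm (Fin (n + (t + t))), ∑ x, law n t x * u (cubePt t σ x).1 ≤
      ∑ σ : Equiv.Perm (Fin (n + (t + t))), a := by
    rw [key, Finset.sum_const, Finset.card_univ, nsmul_eq_mul]
    exact mul_le_mul_of_nonneg_left h hp.le
  obtain ⟨σ, _, hσ⟩ := Finset.exists_le_of_sum_le Finset.univ_nonempty this
  exact ⟨σ, hσ⟩

end KSR

/-- **Blackbox reduction of the Kindler–Safra theorem to its slice version.** There is a
universal constant `c > 0` such that: if for a continuous `α : [0,1] → [0,1]` every Boolean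
function `f'` on a slice `S(m,1/2)` (`m` even) with `‖f'^{>k}‖₂² ≤ ε'` is `α(ε')`-close to a
degree-`k` Boolean function on the slice, then, whenever `α(ε) < 2^{-c k}`, any
`f : {0,1}ⁿ → {0,1}` with `W^{>k}(f) ≤ ε` is `α(ε)`-close to a degree-`k` Boolean function
on the cube. -/
theorem ks_reduction :
    ∃ c : ℝ, 0 < c ∧
      ∀ (k : ℕ) (α : ℝ → ℝ),
        ContinuousOn α (Set.Icc 0 1) →
        (∀ x ∈ Set.Icc (0 : ℝ) 1, α x ∈ Set.Icc (0 : ℝ) 1) →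
        (∀ (m : ℕ), Even m →
          ∀ (ε' : ℝ), ε' ∈ Set.Icc (0 : ℝ) 1 →
            ∀ f' : SlicePoint m (1 / 2) → ℝ, (∀ x, f' x = 0 ∨ f' x = 1) →
              (∃ fk, IsLowProj m (1 / 2) k f' fk ∧ sNormSq (f' - fk) ≤ ε') →
              ∃ g' : SlicePoint m (1 / 2) → ℝ,
                (∀ x, g' x = 0 ∨ g' x = 1) ∧ g' ∈ degLE m (1 / 2) k ∧
                probNe f' g' ≤ α ε') →
        ∀ (n : ℕ) (ε : ℝ), ε ∈ Set.Icc (0 : ℝ) 1 → α ε < (2 : ℝ) ^ (-(c * k)) →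
          ∀ f : (Fin n → Bool) → ℝ, (∀ x, f x = 0 ∨ f x = 1) → WAbove k f ≤ ε →
            ∃ g : (Fin n → Bool) → ℝ,
              (∀ x, g x = 0 ∨ g x = 1) ∧
              (∀ S : Finset (Fin n), k < S.card → walshCoeff g S = 0) ∧
              cProbNe f g ≤ α ε := by
  refine ⟨1, one_pos, ?_⟩
  intro k α hαc hα H n ε hε _ f hf hW
  -- error of the truncation on the slice
  let d : ℕ → ℝ := fun t => ∑ x, KSR.law n t x * (f x - KSR.trunc k f x) ^ 2
  let e : ℕ → ℝ := fun t => min 1 (max ε (d t))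
  have hd : Filter.Tendsto d Filter.atTop (nhds (WAbove k f)) := by
    have h := tendsto_finsetSum (Finset.univ : Finset (Fin n → Bool))
      (fun x _ => (KSR.law_tendsto n x).mul_const ((f x - KSR.trunc k f x) ^ 2))
    rw [← KSR.trunc_err, Finset.sum_div]
    simpa only [one_div_mul_eq_div] using h
  have he : Filter.Tendsto e Filter.atTop (nhds ε) := by
    have h := (tendsto_const_nhds (x := (1:ℝ))).min ((tendsto_const_nhds (x := ε)).max hd)
    rwa [max_eq_left hW, min_eq_right hε.2] at h
  have heI : ∀ t, e t ∈ Set.Icc (0:ℝ) 1 := fun t =>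
    ⟨le_min zero_le_one (le_max_of_le_left hε.1), min_le_left _ _⟩
  have hαe : Filter.Tendsto (fun t => α (e t)) Filter.atTop (nhds (α ε)) :=
    (hαc ε hε).tendsto.comp (tendsto_nhdsWithin_iff.2 ⟨he, Filter.Eventually.of_forall heI⟩)
  have step : ∀ t : ℕ, ∃ g : (Fin n → Bool) → ℝ, (∀ x, g x = 0 ∨ g x = 1) ∧
      (∀ S : Finset (Fin n), k < S.card → walshCoeff g S = 0) ∧
      ∑ x, KSR.law n t x * (if f x = g x then 0 else 1) ≤ α (e t) := by
    intro t
    let f' : SlicePoint (n + (n + (t + t))) (1 / 2) → ℝ :=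
      fun y => f (fun i => y.1 (Fin.castAdd (n + (t + t)) i))
    obtain ⟨fk, hfk⟩ := KSR.exists_proj k f'
    have hnorm : sNormSq (f' - fk) ≤ e t := by
      apply le_min
      · refine (KSR.proj_le k f' fk 0 hfk (Submodule.zero_mem _)).trans ?_
        unfold sNormSq sInner sExp
        apply div_le_one_of_le₀ _ (by positivity)
        refine (Finset.sum_le_sum (g := fun _ => (1:ℝ)) ?_).trans (by simp)
        intro y _
        rcases hf (fun i => y.1 (Fin.castAdd (n + (t + t)) i)) with h | h <;> simp [f', h]
      · refine le_max_of_le_right ?_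
        refine (KSR.proj_le k f' fk _ hfk (KSR.ext_deg f)).trans (le_of_eq ?_)
        refine Eq.trans ?_ (KSR.slice_exp (t := t) (fun x => (f x - KSR.trunc k f x) ^ 2))
        unfold sNormSq sInner
        congr 1
        ext y
        simp only [Pi.sub_apply, f']
        ring
    obtain ⟨g', hg'B, hg'd, hg'p⟩ := H (n + (n + (t + t))) ⟨n + t, by ring⟩ (e t) (heI t) f'
      (fun y => hf _) ⟨fk, hfk, hnorm⟩
    let u : (Fin (n + (n + (t + t))) → Bool) → ℝ := fun y =>
      if h : ((Finset.univ.filter (fun i => y i = true)).card : ℝ)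
          = 1 / 2 * (n + (n + (t + t)) : ℕ) then
        (if f' ⟨y, h⟩ = g' ⟨y, h⟩ then 0 else 1) else 0
    have hu : ∀ y : SlicePoint (n + (n + (t + t))) (1 / 2),
        u y.1 = if f' y = g' y then 0 else 1 := fun y => dif_pos y.2
    obtain ⟨σ, hσ⟩ := KSR.exists_cube u (α (e t)) (by
      simp only [hu]
      exact hg'p)
    refine ⟨fun x => g' (KSR.cubePt t σ x), fun x => hg'B _,
      fun S hS => KSR.cubePt_deg σ g' hg'd S hS, ?_⟩
    simp only [hu] at hσ
    have hf' : ∀ x, f' (KSR.cubePt t σ x) = f x := by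
      intro x
      simp only [f', KSR.cubePt, Fin.append_left]
    simpa only [hf'] using hσ
  by_contra hcon
  push Not at hcon
  have hev : ∀ b : (Fin n → Bool) → Bool, ∀ᶠ t in Filter.atTop,
      (∀ S : Finset (Fin n), k < S.card →
        walshCoeff (fun x => if b x then (1:ℝ) else 0) S = 0) →
      α (e t) < ∑ x, KSR.law n t x * (if f x = (if b x then (1:ℝ) else 0) then 0 else 1) := by
    intro b
    by_cases hb : ∀ S : Finset (Fin n), k < S.card →
        walshCoeff (fun x => if b x then (1:ℝ) else 0) S = 0
    · have h1 := hcon (fun x => if b x then (1:ℝ) else 0)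
        (fun x => by cases b x <;> simp) hb
      have h2 := tendsto_finsetSum (Finset.univ : Finset (Fin n → Bool))
        (fun x _ => (KSR.law_tendsto n x).mul_const
          (if f x = (if b x then (1:ℝ) else 0) then (0:ℝ) else 1))
      have h3 : ∑ x : Fin n → Bool, 1 / 2 ^ n *
          (if f x = (if b x then (1:ℝ) else 0) then (0:ℝ) else 1) =
          cProbNe f (fun x => if b x then (1:ℝ) else 0) := by
        unfold cProbNe cExp
        rw [← Finset.mul_sum, one_div_mul_eq_div]
      rw [h3] at h2
      filter_upwards [hαe.eventually_lt h2 h1] with t ht _ using ht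
    · exact Filter.Eventually.of_forall (fun t h => absurd h hb)
  obtain ⟨t, ht⟩ := (Filter.eventually_all.2 hev).exists
  obtain ⟨g, hgB, hgd, hgp⟩ := step t
  have hgb : (fun x => if (decide (g x = 1)) then (1:ℝ) else 0) = g := by
    ext x
    rcases hgB x with h | h <;> simp [h]
  have h := ht (fun x => decide (g x = 1))
  rw [hgb] at h
  have h' := h hgd
  simp only [fun x => congrFun hgb x] at h'
  linarith
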